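/- arXiv:1107.1182 — 3 statements merged into one kernel-verified Lean document; each statement's English description precedes it below -/
import Mathlib

section
/- For every integer n ≥ 5, every proper subgroup H of the alternating group A_n has index at least n in A_n. -/
/-!
A simple group `G` acts faithfully on the cosets of a proper subgroup `H` of finite index, so `|G|`
divides `[G : H]!`. For `G = Aₙ` this makes `n! / 2` a divisor of `[G : H]!`, whereas
`(n - 1)! < n! / 2` as soon as `n ≥ 3`.
-/

open scoped Nat

section Group

variable {G : Type*} [Group G]

theorem index_normalCore_dvd_factorial_index (H : Subgroup G) [H.FiniteIndex] :
    H.normalCore.index ∣ H.index ! := by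
  rw [H.normalCore_eq_ker, Subgroup.index_ker, H.index_eq_card, ← Nat.card_perm]
  exact Subgroup.card_subgroup_dvd_card _

variable [IsSimpleGroup G] {H : Subgroup G}

theorem normalCore_eq_bot_of_ne_top (hH : H ≠ ⊤) : H.normalCore = ⊥ :=
  H.normalCore_normal.eq_bot_or_eq_top.resolve_right fun htop ↦
    hH (top_le_iff.mp (htop ▸ H.normalCore_le))

theorem card_dvd_factorial_index_of_ne_top [H.FiniteIndex] (hH : H ≠ ⊤) :
    Nat.card G ∣ H.index ! := by
  simpa only [normalCore_eq_bot_of_ne_top hH, Subgroup.index_bot] using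
    index_normalCore_dvd_factorial_index H

end Group

theorem two_mul_factorial_lt_factorial {m n : ℕ} (hn : 3 ≤ n) (hmn : m < n) : 2 * m ! < n ! :=
  calc
    2 * m ! ≤ 2 * (n - 1)! := by gcongr; lia
    _ < n * (n - 1)! := by gcongr; exact hn
    _ = n ! := Nat.mul_factorial_pred (by lia)

section AlternatingGroup

variable {α : Type*} [Fintype α] [DecidableEq α]

theorem three_le_card_of_nontrivial_alternatingGroup [Nontrivial (alternatingGroup α)] :
    3 ≤ Nat.card α := by
  by_contra! hlt
  exact (Subgroup.nontrivial_iff_ne_bot _).mp inferInstance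
    (alternatingGroup.eq_bot_of_card_le_two (Nat.le_of_lt_succ hlt))

theorem alternatingGroup_proper_subgroup_index_ge_general [IsSimpleGroup (alternatingGroup α)]
    {H : Subgroup (alternatingGroup α)} (hH : H ≠ ⊤) : Nat.card α ≤ H.index := by
  have hcard : 3 ≤ Nat.card α := three_le_card_of_nontrivial_alternatingGroup
  have : Nontrivial α := Finite.one_lt_card_iff_nontrivial.mp (by lia)
  by_contra! hlt
  have hle : (Nat.card α)! ≤ 2 * H.index ! :=
    calc
      (Nat.card α)! = 2 * Nat.card (alternatingGroup α) := by
        rw [two_mul_nat_card_alternatingGroup, Nat.card_perm]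
      _ ≤ 2 * H.index ! := by
        gcongr
        exact Nat.le_of_dvd H.index.factorial_pos (card_dvd_factorial_index_of_ne_top hH)
  exact (two_mul_factorial_lt_factorial hcard hlt).not_ge hle

end AlternatingGroup

/-- For every integer `n ≥ 5`, every proper subgroup `H` of the alternating group `A_n`
has index at least `n` in `A_n`. -/
theorem alternatingGroup_proper_subgroup_index_ge (n : ℕ) (hn : 5 ≤ n)
    (H : Subgroup (alternatingGroup (Fin n))) (hH : H ≠ ⊤) :
    n ≤ H.index := by
  have : IsSimpleGroup (alternatingGroup (Fin n)) := alternatingGroup.isSimpleGroup (by simpa)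
  simpa only [Nat.card_fin] using alternatingGroup_proper_subgroup_index_ge_general hH
end

section
/- Fix a finite set S ⊆ ℂ and an integer d ≥ 1. Then there are finitely many equivalence classes of polynomials of degree d whose set of critical values is contained in S; that is, there exist finitely many polynomials g_1, …, g_k ∈ ℂ[z] of degree d such that every polynomial f ∈ ℂ[z] of degree d all of whose critical values lie in S satisfies f(z) = g_i(az + b) identically for some index i, some a ∈ ℂ with a ≠ 0, and some b ∈ ℂ. -/
/-!
Up to an affine change of variable, a polynomial of degree `n + 1` has the form
`f = X ^ (n + 1) + ∑ i < n, vᵢ X ^ i`. Its critical values lie in `S` exactly when `f'` divides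
`∏ s ∈ S, (f - s)`, since a root `z` of `f'` of multiplicity `m` is a root of `f - f(z)` of
multiplicity `m + 1`. This divisibility is a system of polynomial equations in `v`, and it has no
nonconstant families of solutions: let `v` be a solution in an extension `K / k` and `D` a
`k`-derivation of `K`, acting on coefficients. A prime power dividing `f'` has its next power
dividing some `f - s`, hence itself divides `D (f - s) = D f`. So `f' ∣ D f`, and `D f = 0` because
`D f` has degree `< n`. A system of equations whose solutions in every field extension are killed by
all derivations has a zero-dimensional coordinate ring, hence finitely many solutions.
-/

open Polynomial

/-- `c` is a critical value of polynomial `f`: `c = f(d)` for some `d` with `f′(d) = 0`. -/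
def IsCriticalValue (f : ℂ[X]) (c : ℂ) : Prop :=
  ∃ d : ℂ, (Polynomial.derivative f).eval d = 0 ∧ f.eval d = c

section Derivation

variable {R A : Type*} [CommRing R] [CommRing A] [Algebra R A]

theorem pow_dvd_derivation_apply (D : Derivation R A A) {a b : A} {n : ℕ} (h : a ^ (n + 1) ∣ b) :
    a ^ n ∣ D b := by
  obtain ⟨c, rfl⟩ := h
  rw [Derivation.leibniz, Derivation.leibniz_pow, Nat.add_sub_cancel]
  simp only [smul_eq_mul, nsmul_eq_mul]
  exact ⟨a * D c + c * ((n + 1 : ℕ) * D a), by ring⟩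

/-- The extension of a derivation of `A` to `A[X]` by acting on coefficients. This is
`Derivation.mapCoeffs` with its values moved from `PolynomialModule A A` to `A[X]`. -/
noncomputable def coeffDerivation (D : Derivation R A A) : Derivation R A[X] A[X] :=
  PolynomialModule.equivPolynomialSelf.compDer D.mapCoeffs

@[simp]
theorem coeff_coeffDerivation (D : Derivation R A A) (p : A[X]) (i : ℕ) :
    (coeffDerivation D p).coeff i = D (p.coeff i) :=
  rfl

@[simp]
theorem coeffDerivation_C (D : Derivation R A A) (a : A) :
    coeffDerivation D (C a) = C (D a) := by
  ext i
  simp [coeff_C, apply_ite D]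

@[simp]
theorem coeffDerivation_X (D : Derivation R A A) : coeffDerivation D X = 0 := by
  ext i
  simp [coeff_X, apply_ite D]

end Derivation

section Multiplicity

theorem dvd_of_forall_prime_pow_dvd {R : Type*} [CommMonoidWithZero R]
    [UniqueFactorizationMonoid R] {a b : R} (ha : a ≠ 0)
    (h : ∀ (p : R) (n : ℕ), Prime p → p ^ (n + 1) ∣ a → p ^ (n + 1) ∣ b) : a ∣ b := by
  refine (UniqueFactorizationMonoid.dvd_iff_emultiplicity_le ha).2 fun p hp => ?_
  refine emultiplicity_le_emultiplicity_iff.2 fun n hn => ?_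
  cases n with
  | zero => simp
  | succ n => exact h p n hp hn

variable {K : Type*} [Field K] [CharZero K]

theorem pow_succ_dvd_of_pow_dvd_derivative {p f : K[X]} (hp : Irreducible p) (hpf : p ∣ f) {n : ℕ}
    (h : p ^ n ∣ derivative f) : p ^ (n + 1) ∣ f := by
  induction n with
  | zero => simpa using hpf
  | succ n ih =>
    obtain ⟨g, rfl⟩ := ih ((pow_dvd_pow p n.le_succ).trans h)
    have hdvd : p ^ (n + 1) ∣ p ^ n * ((n + 1 : K[X]) * derivative p * g) := by
      rw [derivative_mul, derivative_pow_succ] at h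
      convert (dvd_add_left (dvd_mul_right _ _)).1 h using 1
      simp only [map_add, map_natCast, map_one]
      ring
    rw [pow_succ, mul_dvd_mul_iff_left (pow_ne_zero n hp.ne_zero)] at hdvd
    have hunit : IsUnit (n + 1 : K[X]) := by
      simpa using isUnit_C.2 (n.cast_add_one_ne_zero (R := K)).isUnit
    have hcop : IsCoprime p ((n + 1 : K[X]) * derivative p) :=
      (isCoprime_mul_unit_left_right hunit _ _).2 hp.separable
    rw [pow_succ _ (n + 1)]
    exact mul_dvd_mul_left _ (hcop.dvd_of_dvd_mul_left hdvd)

theorem derivative_dvd_prod_sub_C [IsAlgClosed K] {f : K[X]} (hf : f.natDegree ≠ 0) {S : Finset K}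
    (hS : ∀ z, (derivative f).eval z = 0 → f.eval z ∈ S) :
    derivative f ∣ ∏ s ∈ S, (f - C s) := by
  refine dvd_of_forall_prime_pow_dvd (derivative_ne_zero.2 hf) fun p n hp hpn => ?_
  obtain ⟨z, hz⟩ := IsAlgClosed.exists_root p hp.irreducible.degree_pos.ne'
  have hpf' : p ∣ derivative f := (dvd_pow_self p n.succ_ne_zero).trans hpn
  have hp_assoc : Associated (X - C z) p :=
    (irreducible_X_sub_C z).associated_of_dvd hp.irreducible (dvd_iff_isRoot.2 hz)
  have hpf : p ∣ f - C (f.eval z) := hp_assoc.dvd'.trans (dvd_iff_isRoot.2 (by simp))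
  have hpow : p ^ (n + 1 + 1) ∣ f - C (f.eval z) :=
    pow_succ_dvd_of_pow_dvd_derivative hp.irreducible hpf (by simpa using hpn)
  exact ((pow_dvd_pow p (n + 1).le_succ).trans hpow).trans
    (Finset.dvd_prod_of_mem _ (hS z (eval_eq_zero_of_dvd_of_eval_eq_zero hpf' hz)))

theorem derivative_dvd_coeffDerivation {R ι : Type*} [CommRing R] [Algebra R K]
    (D : Derivation R K K) {f : K[X]} (hf : f.natDegree ≠ 0) {t : Finset ι} {c : ι → K}
    (hc : ∀ i ∈ t, D (c i) = 0) (h : derivative f ∣ ∏ i ∈ t, (f - C (c i))) :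
    derivative f ∣ coeffDerivation D f := by
  refine dvd_of_forall_prime_pow_dvd (derivative_ne_zero.2 hf) fun p n hp hpn => ?_
  have hpf' : p ∣ derivative f := (dvd_pow_self p n.succ_ne_zero).trans hpn
  obtain ⟨i, hi, hpf⟩ := hp.exists_mem_finset_dvd (hpf'.trans h)
  have hpow : p ^ (n + 1 + 1) ∣ f - C (c i) :=
    pow_succ_dvd_of_pow_dvd_derivative hp.irreducible hpf (by simpa using hpn)
  simpa [hc i hi] using pow_dvd_derivation_apply (coeffDerivation D) hpow

end Multiplicity

section ZeroDimensional

theorem formallyUnramified_of_derivation_eq_zero {R K : Type*} [CommRing R] [Field K] [Algebra R K]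
    (h : ∀ D : Derivation R K K, D = 0) : Algebra.FormallyUnramified R K := by
  have hD (x : K) : KaehlerDifferential.D R K x = 0 := by
    refine (Module.forall_dual_apply_eq_zero_iff K _).1 fun φ => ?_
    exact Derivation.congr_fun (h (φ.compDer (KaehlerDifferential.D R K))) x
  refine ⟨(Submodule.subsingleton_iff K).1 (subsingleton_of_bot_eq_top ?_)⟩
  rw [← KaehlerDifferential.span_range_derivation, eq_comm, Submodule.span_eq_bot]
  rintro _ ⟨x, rfl⟩
  exact hD x

theorem derivation_eq_zero_of_isFractionRing {R A K : Type*} [CommRing R] [CommRing A]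
    [Field K] [Algebra R K] [Algebra A K] [IsFractionRing A K] {D : Derivation R K K}
    (h : ∀ a : A, D (algebraMap A K a) = 0) : D = 0 := by
  ext x
  obtain ⟨a, b, -, rfl⟩ := IsFractionRing.div_surjective (A := A) x
  simp [Derivation.leibniz_div, h]

theorem finite_of_derivation_residueField_eq_zero {k A : Type*} [Field k] [CommRing A]
    [Algebra k A] [Algebra.FiniteType k A]
    (h : ∀ (P : Ideal A) [P.IsPrime] (D : Derivation k P.ResidueField P.ResidueField), D = 0) :
    Module.Finite k A := by
  refine (Module.finite_iff_krullDimLE_zero k A).2 (Ring.krullDimLE_zero_iff.2 fun P hP => ?_)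
  have := formallyUnramified_of_derivation_eq_zero (h P)
  have : Algebra.EssFiniteType k P.ResidueField := .comp k A P.ResidueField
  have : Module.Finite k P.ResidueField := Algebra.FormallyUnramified.finite_of_free k _
  have : Algebra.IsIntegral (A ⧸ P) P.ResidueField := .tower_top (R := k)
  exact Ideal.Quotient.maximal_of_isField P
    (isField_of_isIntegral_of_isField P.injective_algebraMap_quotient_residueField
      (Field.toIsField P.ResidueField))

theorem derivation_aeval_eq_zero {R A σ : Type*} [CommRing R] [CommRing A] [Algebra R A]
    {D : Derivation R A A} {x : σ → A} (h : ∀ i, D (x i) = 0) (p : MvPolynomial σ R) :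
    D (MvPolynomial.aeval x p) = 0 := by
  induction p using MvPolynomial.induction_on with
  | C a => simp
  | add p q hp hq => simp [hp, hq]
  | mul_X p i hp => simp [hp, h]

theorem finite_zeroLocus_of_derivation_eq_zero.{u, v} {k : Type u} [Field k] {σ : Type v} [Finite σ]
    (I : Ideal (MvPolynomial σ k))
    (h : ∀ (K : Type (max u v)) [Field K] [Algebra k K], ∀ x ∈ MvPolynomial.zeroLocus K I,
      ∀ (D : Derivation k K K) (i : σ), D (x i) = 0) :
    (MvPolynomial.zeroLocus k I).Finite := by
  let A := MvPolynomial σ k ⧸ I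
  have : Module.Finite k A := by
    refine finite_of_derivation_residueField_eq_zero fun P _ D => ?_
    let φ : MvPolynomial σ k →ₐ[k] P.ResidueField :=
      (IsScalarTower.toAlgHom k A P.ResidueField).comp (Ideal.Quotient.mkₐ k I)
    let x : σ → P.ResidueField := fun i => φ (MvPolynomial.X i)
    have hφ : φ = MvPolynomial.aeval x := MvPolynomial.aeval_unique φ
    have hx : x ∈ MvPolynomial.zeroLocus P.ResidueField I := fun p hp => by
      rw [← hφ]
      simp [φ, A, Ideal.Quotient.eq_zero_iff_mem.2 hp]
    refine derivation_eq_zero_of_isFractionRing (A := A ⧸ P) fun a => ?_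
    obtain ⟨a, rfl⟩ := Ideal.Quotient.mk_surjective a
    obtain ⟨p, rfl⟩ := Ideal.Quotient.mk_surjective a
    have := derivation_aeval_eq_zero (h _ x hx D) p
    rwa [← hφ] at this
  have : Finite (A →ₐ[k] k) := Fintype.finite (minpoly.AlgHom.fintype k A k)
  refine (Set.finite_range
    fun (φ : A →ₐ[k] k) i => φ (Ideal.Quotient.mk I (MvPolynomial.X i))).subset fun x hx => ?_
  exact ⟨Ideal.Quotient.liftₐ I (MvPolynomial.aeval x) hx, by ext i; exact MvPolynomial.aeval_X x i⟩

end ZeroDimensional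

section Divisibility

variable {k σ : Type*} [Field k]

/-- For monic `q`, the equations in `v` expressing that `q` divides `p` once all coefficients are
evaluated at `v`: the vanishing of the remainder. -/
noncomputable def dvdIdeal (p q : (MvPolynomial σ k)[X]) : Ideal (MvPolynomial σ k) :=
  Ideal.span (Set.range (p %ₘ q).coeff)

theorem mem_zeroLocus_dvdIdeal {K : Type*} [Field K] [Algebra k K] {p q : (MvPolynomial σ k)[X]}
    (hq : q.Monic) {v : σ → K} :
    v ∈ MvPolynomial.zeroLocus K (dvdIdeal p q) ↔
      q.map ((MvPolynomial.aeval v : MvPolynomial σ k →ₐ[k] K) : MvPolynomial σ k →+* K) ∣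
        p.map ((MvPolynomial.aeval v : MvPolynomial σ k →ₐ[k] K) : MvPolynomial σ k →+* K) := by
  rw [← modByMonic_eq_zero_iff_dvd (hq.map _), ← map_modByMonic _ hq, dvdIdeal,
    MvPolynomial.zeroLocus_span, Polynomial.ext_iff]
  simp

end Divisibility

section Depressed

/-- The depressed polynomial `X ^ (n + 1) + v (n - 1) * X ^ (n - 1) + ⋯ + v 0`: monic of degree
`n + 1`, without a term of degree `n`. -/
noncomputable def depressed {B : Type*} [Semiring B] {n : ℕ} (v : Fin n → B) : B[X] :=
  X ^ (n + 1) + ∑ i, C (v i) * X ^ (i : ℕ)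

section Semiring

variable {B : Type*} [Semiring B] {n : ℕ}

theorem map_depressed {B' : Type*} [Semiring B'] (φ : B →+* B') (v : Fin n → B) :
    (depressed v).map φ = depressed (φ ∘ v) := by
  simp [depressed, Polynomial.map_sum]

theorem degree_sum_fin_lt_succ (v : Fin n → B) :
    degree (∑ i, C (v i) * X ^ (i : ℕ)) < (n + 1 : ℕ) :=
  (degree_sum_fin_lt v).trans (by exact_mod_cast n.lt_succ_self)

theorem monic_depressed (v : Fin n → B) : (depressed v).Monic :=
  monic_X_pow_add (degree_sum_fin_lt_succ v)

theorem natDegree_depressed [Nontrivial B] (v : Fin n → B) :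
    (depressed v).natDegree = n + 1 :=
  natDegree_eq_of_degree_eq_some <| by
    rw [depressed, degree_add_eq_left_of_degree_lt] <;> rw [degree_X_pow]
    exact degree_sum_fin_lt_succ v

theorem eq_depressed {f : B[X]} (hf : f.Monic) (hdeg : f.natDegree = n + 1)
    (hcoeff : f.coeff n = 0) : f = depressed fun i : Fin n => f.coeff i := by
  conv_lhs => rw [hf.as_sum, hdeg, Finset.sum_range_succ, hcoeff]
  simp [depressed, Fin.sum_univ_eq_sum_range fun i => C (f.coeff i) * X ^ i]

end Semiring

theorem coeffDerivation_depressed {R B : Type*} [CommRing R] [CommRing B] [Algebra R B]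
    {n : ℕ} (D : Derivation R B B) (v : Fin n → B) :
    coeffDerivation D (depressed v) = ∑ i, C (D (v i)) * X ^ (i : ℕ) := by
  simp [depressed, Derivation.leibniz_pow]

variable {k : Type*} [Field k] [CharZero k] {n : ℕ}

theorem derivation_eq_zero_of_derivative_depressed_dvd {R ι : Type*} [CommRing R] [Algebra R k]
    (D : Derivation R k k) {t : Finset ι} {c : ι → k} (hc : ∀ i ∈ t, D (c i) = 0) {v : Fin n → k}
    (h : derivative (depressed v) ∣ ∏ i ∈ t, (depressed v - C (c i))) (i : Fin n) :
    D (v i) = 0 := by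
  have hdeg : (depressed v).natDegree ≠ 0 := by simp [natDegree_depressed]
  have hzero : coeffDerivation D (depressed v) = 0 := by
    refine eq_zero_of_dvd_of_degree_lt (derivative_dvd_coeffDerivation D hdeg hc h) ?_
    rw [coeffDerivation_depressed, degree_derivative hdeg, natDegree_depressed]
    exact degree_sum_fin_lt _
  have := congrArg (coeff · (i : ℕ)) hzero
  rw [coeffDerivation_depressed] at this
  simpa [coeff_X_pow, Fin.val_inj] using this

theorem finite_setOf_derivative_depressed_dvd (n : ℕ) (S : Finset k) :
    {v : Fin n → k | derivative (depressed v) ∣ ∏ s ∈ S, (depressed v - C s)}.Finite := by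
  let U : (MvPolynomial (Fin n) k)[X] := depressed MvPolynomial.X
  let p := ∏ s ∈ S, (U - C (MvPolynomial.C s))
  let q := C (MvPolynomial.C ((n + 1 : k)⁻¹)) * derivative U
  have hn : (n + 1 : k) ≠ 0 := n.cast_add_one_ne_zero
  have hq : q.Monic := by
    refine monic_C_mul_of_mul_leadingCoeff_eq_one ?_
    rw [leadingCoeff_derivative, natDegree_depressed, monic_depressed]
    have hcast : ((n + 1 : ℕ) : MvPolynomial (Fin n) k) = MvPolynomial.C (n + 1 : k) := by simp
    rw [one_mul, hcast, ← map_mul, inv_mul_cancel₀ hn, map_one]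
  have mem_iff (K : Type _) [Field K] [Algebra k K] (v : Fin n → K) :
      v ∈ MvPolynomial.zeroLocus K (dvdIdeal p q) ↔
        derivative (depressed v) ∣ ∏ s ∈ S, (depressed v - C (algebraMap k K s)) := by
    have hU : U.map ((MvPolynomial.aeval v : MvPolynomial (Fin n) k →ₐ[k] K) :
        MvPolynomial (Fin n) k →+* K) = depressed v := by
      rw [map_depressed]
      congr 1
      ext i
      simp
    have hunit : IsUnit (C (algebraMap k K (n + 1)⁻¹)) :=
      isUnit_C.2 ((inv_ne_zero hn).isUnit.map (algebraMap k K))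
    rw [mem_zeroLocus_dvdIdeal hq, Polynomial.map_mul, ← derivative_map, hU, Polynomial.map_C,
      RingHom.coe_coe, MvPolynomial.aeval_C, hunit.mul_left_dvd, Polynomial.map_prod]
    simp [hU]
  refine (finite_zeroLocus_of_derivation_eq_zero (dvdIdeal p q) fun K _ _ v hv D => ?_).subset
    fun v hv => (mem_iff k v).2 hv
  have : CharZero K := charZero_of_injective_algebraMap (algebraMap k K).injective
  exact derivation_eq_zero_of_derivative_depressed_dvd D (fun s _ => D.map_algebraMap s)
    ((mem_iff K v).1 hv)

end Depressed

section AffineChange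

theorem coeff_taylor_natDegree_sub_one {R : Type*} [CommRing R] {f : R[X]} {n : ℕ}
    (hf : f.natDegree = n + 1) (b : R) :
    (taylor b f).coeff n = f.coeff n + (n + 1) * f.leadingCoeff * b := by
  have hdeg : (hasseDeriv n f).natDegree < 2 := by
    have := natDegree_hasseDeriv_le f n
    lia
  rw [taylor_coeff, eval_eq_sum_range' hdeg, leadingCoeff, hf]
  simp [Finset.sum_range_succ, hasseDeriv_coeff, add_comm 1 n]

variable {k : Type*} [Field k]

theorem comp_affine_comp_inverse {a : k} (ha : a ≠ 0) (b : k) (f : k[X]) :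
    (f.comp (C a * X + C b)).comp (C a⁻¹ * X + C (-(a⁻¹ * b))) = f := by
  have : (C a * X + C b).comp (C a⁻¹ * X + C (-(a⁻¹ * b))) = X := by
    rw [add_comp, mul_comp, C_comp, X_comp, C_comp, mul_add, ← mul_assoc, ← C_mul, ← C_mul]
    simp [ha]
  rw [comp_assoc, this, comp_X]

theorem exists_taylor_eq_depressed [CharZero k] {f : k[X]} {n : ℕ} (hf : f.Monic)
    (hdeg : f.natDegree = n + 1) : ∃ (b : k) (v : Fin n → k), taylor b f = depressed v := by
  have hn : (n + 1 : k) ≠ 0 := n.cast_add_one_ne_zero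
  refine ⟨-f.coeff n / (n + 1), _, eq_depressed ?_ (by rwa [natDegree_taylor]) ?_⟩
  · rw [Monic, leadingCoeff_taylor, hf]
  · rw [coeff_taylor_natDegree_sub_one hdeg, hf.leadingCoeff]
    field_simp
    ring

variable [IsAlgClosed k]

theorem exists_monic_comp_C_mul_X {f : k[X]} (hf : f.natDegree ≠ 0) :
    ∃ a ≠ 0, (f.comp (C a * X)).Monic := by
  have hlead : f.leadingCoeff ≠ 0 := leadingCoeff_ne_zero.2 (by rintro rfl; simp at hf)
  obtain ⟨a, ha⟩ := IsAlgClosed.exists_pow_nat_eq f.leadingCoeff⁻¹ hf.bot_lt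
  have ha0 : a ≠ 0 := by
    rintro rfl
    rw [zero_pow hf] at ha
    exact inv_ne_zero hlead ha.symm
  refine ⟨a, ha0, ?_⟩
  rw [Monic, leadingCoeff_comp (by rw [natDegree_C_mul_X a ha0]; exact one_ne_zero)]
  simp [ha, hlead]

theorem exists_comp_affine_eq_depressed [CharZero k] {f : k[X]} {n : ℕ}
    (hf : f.natDegree = n + 1) :
    ∃ a b : k, a ≠ 0 ∧ ∃ v : Fin n → k, f.comp (C a * X + C b) = depressed v := by
  obtain ⟨a, ha, hmonic⟩ := exists_monic_comp_C_mul_X (f := f) (by lia)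
  obtain ⟨b, v, hv⟩ := exists_taylor_eq_depressed hmonic (n := n)
    (by rw [natDegree_comp, natDegree_C_mul_X a ha, mul_one, hf])
  refine ⟨a, a * b, ha, v, ?_⟩
  rw [← hv, taylor_apply, comp_assoc]
  simp [mul_add]

end AffineChange

theorem finitely_many_classes_with_critical_values_in_general {k : Type*} [Field k] [IsAlgClosed k]
    [CharZero k] (S : Set k) (hS : S.Finite) (d : ℕ) (hd : 1 ≤ d) :
    ∃ (m : ℕ) (g : Fin m → k[X]),
      (∀ i, (g i).natDegree = d) ∧
      ∀ f : k[X], f.natDegree = d → (∀ z : k, (derivative f).eval z = 0 → f.eval z ∈ S) →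
        ∃ (i : Fin m) (a b : k), a ≠ 0 ∧ f = (g i).comp (C a * X + C b) := by
  obtain ⟨n, rfl⟩ := Nat.exists_eq_add_of_le' hd
  obtain ⟨m, v, -, hv⟩ := (finite_setOf_derivative_depressed_dvd n hS.toFinset).fin_param
  refine ⟨m, fun i => depressed (v i), fun i => natDegree_depressed _, fun f hf hcrit => ?_⟩
  obtain ⟨a, b, ha, w, hw⟩ := exists_comp_affine_eq_depressed hf
  have hw_crit (z : k) (hz : (derivative (depressed w)).eval z = 0) :
      (depressed w).eval z ∈ hS.toFinset := by
    rw [← hw, derivative_comp] at hz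
    simpa [← hw] using hcrit (a * z + b) (by simpa [ha] using hz)
  obtain ⟨i, rfl⟩ : w ∈ Set.range v :=
    hv ▸ derivative_dvd_prod_sub_C (by simp [natDegree_depressed]) hw_crit
  exact ⟨i, a⁻¹, -(a⁻¹ * b), inv_ne_zero ha, by
    simpa only [← hw] using (comp_affine_comp_inverse ha b f).symm⟩

/-- Fix a finite set `S ⊆ ℂ` and an integer `d ≥ 1`.  There are finitely many equivalence
classes (under `f(z) ∼ f(az + b)`, `a ≠ 0`) of polynomials of degree `d` whose critical
values all lie in `S`: there exist finitely many polynomials `g₁, …, g_k` of degree `d`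
such that every degree-`d` polynomial with all critical values in `S` equals
`gᵢ(az + b)` for some `i`, some `a ≠ 0` and some `b`. -/
theorem finitely_many_classes_with_critical_values_in (S : Set ℂ) (hS : S.Finite)
    (d : ℕ) (hd : 1 ≤ d) :
    ∃ (k : ℕ) (g : Fin k → ℂ[X]),
      (∀ i, (g i).natDegree = d) ∧
      ∀ f : ℂ[X], f.natDegree = d → (∀ c : ℂ, IsCriticalValue f c → c ∈ S) →
        ∃ (i : Fin k) (a b : ℂ), a ≠ 0 ∧ f = (g i).comp (C a * X + C b) := by
  obtain ⟨k, g, hg, hfg⟩ := finitely_many_classes_with_critical_values_in_general S hS d hd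
  exact ⟨k, g, hg, fun f hf hcrit => hfg f hf fun z hz => hcrit _ ⟨z, hz, rfl⟩⟩
end

section
/- Let n ≥ 3 be an odd integer. Let Z ⊆ ℂ^(n−2) be the set of tuples (s_2, s_3, …, s_{n−1}) such that the polynomial x² − disc_t(t^n + s_2 t^(n−2) + ⋯ + s_{n−1} t − y) ∈ ℂ[y, x] is not irreducible (equivalently, such that the plane curve x² = disc_t(t^n + s_2 t^(n−2) + ⋯ + s_{n−1} t − y) fails to be geometrically irreducible). Then Z is a Zariski-closed subset of ℂ^(n−2) (i.e., Z is the common zero locus of an ideal of polynomials in ℂ[s_2, …, s_{n−1}]), and the Krull dimension of the quotient ring ℂ[s_2, …, s_{n−1}]/I(Z), where I(Z) is the ideal of all polynomials vanishing on Z, is at most (n − 1)/2. -/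
/-- The Sylvester matrix of two polynomials `f` and `g`, regarded as having degrees
`m` and `n` respectively. -/
def sylvester {R : Type*} [CommRing R] (f g : Polynomial R) (m n : ℕ) :
    Matrix (Fin (n + m)) (Fin (n + m)) R :=
  Matrix.of fun i j =>
    if (i : ℕ) < n then
      (if (i : ℕ) ≤ (j : ℕ) ∧ (j : ℕ) ≤ (i : ℕ) + m then f.coeff (m + i - j) else 0)
    else
      (if (i : ℕ) - n ≤ (j : ℕ) ∧ (j : ℕ) ≤ ((i : ℕ) - n) + n then
        g.coeff (n + ((i : ℕ) - n) - j) else 0)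

/-- The resultant `Res(f, g)`: the determinant of the Sylvester matrix of `f` and `g`. -/
noncomputable def resultant {R : Type*} [CommRing R] (f g : Polynomial R) : R :=
  (sylvester f g f.natDegree g.natDegree).det

/-- The discriminant `disc f = (−1)^(m(m−1)/2) · Res(f, f′)` of a polynomial `f` of
degree `m`. -/
noncomputable def polyDisc {R : Type*} [CommRing R] (f : Polynomial R) : R :=
  (-1) ^ (f.natDegree * (f.natDegree - 1) / 2) * resultant f (Polynomial.derivative f)

/-- The ideal of all polynomials vanishing on a subset `Z ⊆ ℂ^m`. -/
noncomputable def vanishingIdeal {m : ℕ} (Z : Set (Fin m → ℂ)) : Ideal (MvPolynomial (Fin m) ℂ) where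
  carrier := {p | ∀ x ∈ Z, MvPolynomial.eval x p = 0}
  add_mem' := by
    intro a b ha hb x hx
    simp [ha x hx, hb x hx]
  zero_mem' := by
    intro x hx
    simp
  smul_mem' := by
    intro c p hp x hx
    simp [smul_eq_mul, hp x hx]

/-!
For a centered monic polynomial `f`, the discriminant of `f(t) - y` is, up to a nonzero constant,
the monic polynomial `P(y)` whose roots are the critical values of `f`, so the curve is reducible
exactly when `P` is, up to that constant, a square. If `r` is the polynomial part of `√P`, this says
that `P - r ^ 2` vanishes identically, which is a closed condition on the coefficients of `f`.

The dimension bound comes from the finiteness of the map sending `f` to `P` (the Lyashko–Looijenga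
map). By the valuative criterion, it suffices that the critical points are integral whenever the
critical values are: otherwise, rescaling `f` by its largest critical point and reducing to the
residue field gives a centered monic polynomial all of whose critical values are `0`, but with a
nonzero critical point. However, `h' ∣ h` and centeredness force `h = t ^ d`. On the reducible locus
`P = r ^ 2` is determined by the `(n - 1) / 2` nonleading coefficients of `r`, over which the
coordinate ring is therefore integral.
-/

section

open Polynomial

section CriticalPoints

lemma coeff_X_mul_derivative {R : Type*} [CommSemiring R] (p : R[X]) (i : ℕ) :
    (X * derivative p).coeff i = i * p.coeff i := by
  cases i <;> simp [coeff_X_mul, coeff_derivative, mul_comm]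

lemma eq_X_pow_of_X_mul_derivative_eq {R : Type*} [CommRing R] [IsDomain R] [CharZero R]
    {h : R[X]} (hm : h.Monic) (heuler : X * derivative h = C (h.natDegree : R) * h) :
    h = X ^ h.natDegree := by
  ext i
  rw [coeff_X_pow]
  split_ifs with hi
  · rw [hi, hm.coeff_natDegree]
  · have hcoeff : (i : R) * h.coeff i = h.natDegree * h.coeff i := by
      rw [← coeff_X_mul_derivative, heuler, coeff_C_mul]
    exact (mul_eq_mul_right_iff.mp hcoeff).resolve_left (by exact_mod_cast hi)

variable {k : Type*} [Field k] [CharZero k] {h : k[X]}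

lemma derivative_dvd_of_isRoot (hd : h.natDegree ≠ 0) (hsplit : (derivative h).Splits)
    (hcrit : ∀ c ∈ (derivative h).roots, h.IsRoot c) : derivative h ∣ h := by
  classical
  refine hsplit.dvd_of_roots_le_roots (mt derivative_eq_zero.mp hd)
    (Multiset.le_iff_count.mpr fun c => ?_)
  by_cases hc : c ∈ (derivative h).roots
  · rw [count_roots, count_roots, derivative_rootMultiplicity_of_root (hcrit c hc)]
    exact Nat.sub_le _ _
  · simp only [Multiset.count_eq_zero_of_notMem hc, zero_le]

lemma X_mul_derivative_eq_of_derivative_dvd (hm : h.Monic) (hc : h.nextCoeff = 0)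
    (hdvd : derivative h ∣ h) : X * derivative h = C (h.natDegree : k) * h := by
  obtain hd | hd := eq_or_ne h.natDegree 0
  · simp [hm.natDegree_eq_zero.mp hd]
  obtain ⟨q, hq⟩ := hdvd
  have hq0 : q ≠ 0 := by rintro rfl; exact hm.ne_zero (by simpa using hq)
  have hq1 : q.natDegree = 1 := by
    have := natDegree_mul (mt derivative_eq_zero.mp hd) hq0
    rw [← hq, natDegree_derivative] at this
    omega
  have hlead : (h.natDegree : k) * q.coeff 1 = 1 := by
    rw [← hq1, coeff_natDegree, ← one_mul (h.natDegree : k), ← hm.leadingCoeff,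
      ← leadingCoeff_derivative, ← leadingCoeff_mul, ← hq, hm.leadingCoeff]
  obtain ⟨b, hb⟩ : ∃ b, C (h.natDegree : k) * h = X * derivative h + C b * derivative h := by
    refine ⟨h.natDegree * q.coeff 0, ?_⟩
    rw [← one_mul (X * _), ← C_1, ← hlead, C_mul, C_mul]
    linear_combination C (h.natDegree : k) * hq +
      C (h.natDegree : k) * derivative h * eq_X_add_C_of_natDegree_le_one hq1.le
  have hb0 : b = 0 := by
    have hcoeff := congrArg (coeff · (h.natDegree - 1)) hb
    rw [nextCoeff_of_natDegree_pos (by omega)] at hc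
    simp only [coeff_C_mul, coeff_add, coeff_X_mul_derivative, hc, coeff_derivative,
      Nat.sub_add_cancel (Nat.pos_of_ne_zero hd), hm.coeff_natDegree] at hcoeff
    have : (h.natDegree - 1 : ℕ) + (1 : k) ≠ 0 := Nat.cast_add_one_ne_zero _
    simpa [this] using hcoeff
  rw [hb, hb0, C_0, zero_mul, add_zero]

theorem eq_X_pow_of_criticalValues_eq_zero (hm : h.Monic) (hc : h.nextCoeff = 0)
    (hsplit : (derivative h).Splits) (hcrit : ∀ c ∈ (derivative h).roots, h.IsRoot c) :
    h = X ^ h.natDegree := by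
  obtain hd | hd := eq_or_ne h.natDegree 0
  · rw [hd, pow_zero, hm.natDegree_eq_zero.mp hd]
  · exact eq_X_pow_of_X_mul_derivative_eq hm
      (X_mul_derivative_eq_of_derivative_dvd hm hc (derivative_dvd_of_isRoot hd hsplit hcrit))

end CriticalPoints

section Lifts

variable {S K : Type*} [CommRing S] [Algebra ℚ S] [CommRing K] {φ : S →+* K} {p : K[X]}

lemma coeff_mem_range_of_derivative_mem_lifts (hp : derivative p ∈ lifts φ) {i : ℕ} (hi : i ≠ 0) :
    p.coeff i ∈ φ.range := by
  obtain ⟨i, rfl⟩ := Nat.exists_eq_succ_of_ne_zero hi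
  obtain ⟨s, hs⟩ := (lifts_iff_coeff_lifts _).mp hp i
  have hinv : algebraMap ℚ S (i + 1)⁻¹ * (i + 1) = 1 := by
    rw [← map_natCast (algebraMap ℚ S), ← map_one (algebraMap ℚ S), ← map_add, ← map_mul,
      inv_mul_cancel₀ (Nat.cast_add_one_ne_zero i)]
  refine ⟨algebraMap ℚ S (i + 1)⁻¹ * s, ?_⟩
  have := congrArg φ hinv
  rw [map_mul, map_add, map_natCast, map_one] at this
  rw [map_mul, hs, coeff_derivative, mul_left_comm, this, mul_one]

lemma mem_lifts_of_derivative_mem_lifts (hp : derivative p ∈ lifts φ) {a : S}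
    (ha : p.eval (φ a) ∈ φ.range) : p ∈ lifts φ := by
  obtain ⟨q, hq⟩ : p - C (p.coeff 0) ∈ lifts φ := by
    rw [lifts_iff_coeff_lifts]
    rintro (_ | i)
    · exact ⟨0, by simp⟩
    · simpa using coeff_mem_range_of_derivative_mem_lifts hp i.succ_ne_zero
  have h0 : p.coeff 0 = p.eval (φ a) - φ (q.eval a) := by
    rw [← eval₂_at_apply, ← eval_map, ← coe_mapRingHom, hq]
    simp
  obtain ⟨b, hb⟩ : p.coeff 0 ∈ φ.range := h0 ▸ sub_mem ha ⟨_, rfl⟩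
  rw [coe_mapRingHom] at hq
  exact ⟨q + C b, by rw [coe_mapRingHom, Polynomial.map_add, hq, map_C, hb, sub_add_cancel]⟩

lemma derivative_mem_lifts_of_roots_mem_range {R K : Type*} [CommRing R] [Field K] [CharZero K]
    {φ : R →+* K} {f : K[X]} (hf : f.Monic) (hsplit : (derivative f).Splits)
    (hroots : ∀ c ∈ (derivative f).roots, c ∈ φ.range) : derivative f ∈ lifts φ := by
  rw [hsplit.eq_prod_roots, leadingCoeff_derivative, hf.leadingCoeff, one_mul]
  refine mul_mem (map_natCast φ _ ▸ C_mem_lifts φ _) (multiset_prod_mem _ fun p hp => ?_)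
  obtain ⟨c, hc, rfl⟩ := Multiset.mem_map.mp hp
  obtain ⟨s, rfl⟩ := hroots c hc
  exact ⟨X - C s, by simp⟩

end Lifts

section ScaleRoots

lemma derivative_scaleRoots {R : Type*} [CommSemiring R] [IsAddTorsionFree R] (p : R[X]) (s : R) :
    derivative (p.scaleRoots s) = (derivative p).scaleRoots s := by
  ext i
  simp only [coeff_derivative, coeff_scaleRoots, natDegree_derivative, Nat.sub_sub, add_comm 1 i]
  ring

lemma nextCoeff_scaleRoots {R : Type*} [Semiring R] (p : R[X]) (s : R) :
    (p.scaleRoots s).nextCoeff = p.nextCoeff * s := by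
  by_cases hp : p.natDegree = 0
  · simp [nextCoeff, hp]
  · simp [nextCoeff, hp, Nat.sub_sub_self (Nat.pos_of_ne_zero hp)]

end ScaleRoots

section Valuations

lemma map_criticalPoint_eq_zero {V k : Type*} [CommRing V] [IsDomain V] [Field k] [CharZero k]
    (ρ : V →+* k) {g : V[X]} (hm : g.Monic) (hc : g.nextCoeff = 0)
    (hsplit : (derivative g).Splits) (hcrit : ∀ c ∈ (derivative g).roots, ρ (g.eval c) = 0)
    {c : V} (hroot : c ∈ (derivative g).roots) : ρ c = 0 := by
  have hm' := hm.map ρ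
  obtain hd | hd := eq_or_ne g.natDegree 0
  · simp [hm.natDegree_eq_zero.mp hd] at hroot
  have hd' : derivative (g.map ρ) ≠ 0 := by rwa [Ne, derivative_eq_zero, hm.natDegree_map]
  have hroots : (derivative (g.map ρ)).roots = (derivative g).roots.map ρ := by
    rw [derivative_map] at hd' ⊢
    exact hsplit.roots_map_of_ne_zero hd'
  have hpow : g.map ρ = X ^ (g.map ρ).natDegree := by
    refine eq_X_pow_of_criticalValues_eq_zero hm' ?_ (derivative_map g ρ ▸ hsplit.map ρ) ?_
    · rw [nextCoeff_map_of_leadingCoeff_ne_zero _ (by simp [hm.leadingCoeff]), hc, map_zero]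
    · rw [hroots, Multiset.forall_mem_map_iff]
      intro c hc
      rw [IsRoot, eval_map_apply, hcrit c hc]
  have hzero : (g.map ρ).eval (ρ c) = 0 := by rw [eval_map_apply, hcrit c hroot]
  rw [hpow, eval_pow, eval_X] at hzero
  exact eq_zero_of_pow_eq_zero hzero

lemma charZero_of_algebra_rat {R K : Type*} [CommRing R] [Algebra ℚ R] [CommRing K] [Nontrivial K]
    (φ : R →+* K) : CharZero K :=
  charZero_of_injective_ringHom (φ.comp (algebraMap ℚ R)).injective

variable {K : Type*} [Field K] {V : ValuationSubring K} [Algebra ℚ V] {f : K[X]}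

lemma valuation_criticalPoint_lt_one (hm : f.Monic) (hc : f.nextCoeff = 0)
    (hsplit : (derivative f).Splits) (hroots : ∀ c ∈ (derivative f).roots, c ∈ V)
    (hcrit : ∀ c ∈ (derivative f).roots, V.valuation (f.eval c) < 1)
    {c : K} (hroot : c ∈ (derivative f).roots) : V.valuation c < 1 := by
  have : CharZero (IsLocalRing.ResidueField V) :=
    charZero_of_algebra_rat (IsLocalRing.residue V)
  have : CharZero K := charZero_of_algebra_rat V.subtype
  have hinj := V.subtype_injective
  have hroots' : ∀ c ∈ (derivative f).roots, c ∈ V.subtype.range := by simpa using hroots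
  have hlift : f ∈ lifts V.subtype :=
    mem_lifts_of_derivative_mem_lifts (a := ⟨c, hroots c hroot⟩)
      (derivative_mem_lifts_of_roots_mem_range hm hsplit hroots')
      ⟨⟨_, (V.valuation_le_one_iff _).mp (hcrit c hroot).le⟩, rfl⟩
  obtain ⟨g, rfl, -, hg⟩ := lifts_and_natDegree_eq_and_monic hlift hm
  rw [derivative_map] at hsplit hroots' hroot hcrit
  have hgsplit : (derivative g).Splits := hsplit.of_splits_map_of_injective hinj hroots'
  rw [nextCoeff_map hinj, map_eq_zero_iff _ hinj] at hc
  rw [hgsplit.roots_map_of_injective hinj] at hcrit hroot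
  obtain ⟨a, ha, rfl⟩ := Multiset.mem_map.mp hroot
  have hvaluation (x : V) : IsLocalRing.residue V x = 0 ↔ V.valuation (V.subtype x) < 1 := by
    rw [IsLocalRing.residue_eq_zero_iff, V.valuation_lt_one_iff, V.subtype_apply]
  refine (hvaluation a).mp (map_criticalPoint_eq_zero _ hg hc hgsplit (fun b hb => ?_) ha)
  rw [hvaluation, ← eval_map_apply]
  exact hcrit _ (Multiset.mem_map_of_mem _ hb)

theorem criticalPoint_mem_of_criticalValue_mem (hm : f.Monic) (hc : f.nextCoeff = 0)
    (hsplit : (derivative f).Splits) (hcrit : ∀ c ∈ (derivative f).roots, f.eval c ∈ V) :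
    ∀ c ∈ (derivative f).roots, c ∈ V := by
  classical
  by_contra! ⟨c, hroot, hcV⟩
  have : CharZero K := charZero_of_algebra_rat V.subtype
  obtain ⟨l, hl, hmax⟩ := Finset.exists_max_image (derivative f).roots.toFinset V.valuation
    ⟨c, Multiset.mem_toFinset.mpr hroot⟩
  simp only [Multiset.mem_toFinset] at hl hmax
  have hl1 : 1 < V.valuation l := by
    rw [← V.valuation_le_one_iff, not_le] at hcV
    exact hcV.trans_le (hmax c hroot)
  have hl0 : l ≠ 0 := by rintro rfl; simp at hl1
  have hinv : V.valuation l⁻¹ < 1 := by rw [map_inv₀]; exact inv_lt_one_of_one_lt₀ hl1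
  have hdeg : f.natDegree ≠ 0 := by rintro h; simp [hm.natDegree_eq_zero.mp h] at hl
  have hroots : (derivative (f.scaleRoots l⁻¹)).roots = (derivative f).roots.map (l⁻¹ * ·) := by
    rw [derivative_scaleRoots, roots_scaleRoots _ (IsUnit.mk0 _ (inv_ne_zero hl0))]
  have hlt := valuation_criticalPoint_lt_one (V := V) (f := f.scaleRoots l⁻¹) (c := l⁻¹ * l)
    ((monic_scaleRoots_iff _).mpr hm) (by rw [nextCoeff_scaleRoots, hc, zero_mul])
    (derivative_scaleRoots f l⁻¹ ▸ hsplit.scaleRoots _) ?_ ?_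
    (hroots ▸ Multiset.mem_map_of_mem _ hl)
  · simp [hl0] at hlt
  · rw [hroots, Multiset.forall_mem_map_iff]
    intro a ha
    rw [← V.valuation_le_one_iff, map_mul, map_inv₀]
    exact inv_mul_le_one_of_le₀ (hmax a ha) zero_le
  · rw [hroots, Multiset.forall_mem_map_iff]
    intro a ha
    rw [scaleRoots_eval_mul, map_mul, map_pow]
    exact mul_lt_one_of_lt_of_le (pow_lt_one' hinv hdeg)
      ((V.valuation_le_one_iff _).mpr (hcrit a ha))

end Valuations

section CriticalValuePolynomial

lemma isIntegral_of_forall_mem_valuationSubring {R K : Type*} [CommRing R] [Field K] [Algebra R K]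
    {x : K} (h : ∀ V : ValuationSubring K, (∀ r, algebraMap R K r ∈ V) → x ∈ V) :
    IsIntegral R x := by
  by_contra hx
  obtain ⟨V, hV, hxV⟩ := Subring.exists_le_valuationSubring_of_isIntegrallyClosedIn
    (R := (integralClosure R K).toSubring) (x := x) hx
  exact hxV (h V fun r => hV (algebraMap_mem (integralClosure R K) r))

/-- The polynomial whose roots are the critical values of `f`, repeated according to the
multiplicities of the critical points of `f` in the domain `R`. -/
noncomputable def criticalValuePolynomial {R : Type*} [CommRing R] [IsDomain R] (f : R[X]) : R[X] :=
  (((derivative f).roots.map f.eval).map fun v => X - C v).prod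

section

variable {R : Type*} [CommRing R] [IsDomain R] (f : R[X])

lemma monic_criticalValuePolynomial : (criticalValuePolynomial f).Monic :=
  monic_multiset_prod_of_monic _ _ fun _ _ => monic_X_sub_C _

lemma roots_criticalValuePolynomial :
    (criticalValuePolynomial f).roots = (derivative f).roots.map f.eval :=
  roots_multiset_prod_X_sub_C _

lemma natDegree_criticalValuePolynomial [CharZero R] (hsplit : (derivative f).Splits) :
    (criticalValuePolynomial f).natDegree = f.natDegree - 1 := by
  rw [← natDegree_derivative, hsplit.natDegree_eq_card_roots, criticalValuePolynomial,
    natDegree_multiset_prod_X_sub_C_eq_card, Multiset.card_map]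

end

variable {R K : Type*} [CommRing R] [Algebra ℚ R] [Field K] [Algebra R K] {f : K[X]}

lemma isIntegral_criticalPoint (hm : f.Monic) (hc : f.nextCoeff = 0)
    (hsplit : (derivative f).Splits) (hR : criticalValuePolynomial f ∈ lifts (algebraMap R K))
    {c : K} (hroot : c ∈ (derivative f).roots) : IsIntegral R c := by
  have hcrit : ∀ a ∈ (derivative f).roots, IsIntegral R (f.eval a) := by
    intro a ha
    obtain ⟨p, hp, -, hpm⟩ := lifts_and_natDegree_eq_and_monic hR (monic_criticalValuePolynomial f)
    refine ⟨p, hpm, ?_⟩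
    have : f.eval a ∈ (criticalValuePolynomial f).roots :=
      roots_criticalValuePolynomial f ▸ Multiset.mem_map_of_mem _ ha
    rw [eval₂_eq_eval_map, hp]
    exact isRoot_of_mem_roots this
  refine isIntegral_of_forall_mem_valuationSubring fun V hV => ?_
  let φ : R →+* V := (algebraMap R K).codRestrict V hV
  let : Algebra ℚ V := (φ.comp (algebraMap ℚ R)).toAlgebra
  refine criticalPoint_mem_of_criticalValue_mem hm hc hsplit (fun a ha => ?_) c hroot
  have : IsIntegral V (f.eval a) := (hcrit a ha).map_of_comp_eq φ (RingHom.id K) rfl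
  obtain ⟨⟨_, h⟩, rfl⟩ := IsIntegrallyClosed.isIntegral_iff.mp this
  exact h

/-- Finiteness of the Lyashko–Looijenga map. -/
theorem isIntegral_coeff_of_criticalValuePolynomial_mem_lifts (hm : f.Monic) (hc : f.nextCoeff = 0)
    (hsplit : (derivative f).Splits) (hR : criticalValuePolynomial f ∈ lifts (algebraMap R K))
    {i : ℕ} (hi : i ≠ 0) : IsIntegral R (f.coeff i) := by
  let : Algebra ℚ (integralClosure R K) :=
    ((algebraMap R (integralClosure R K)).comp (algebraMap ℚ R)).toAlgebra
  have : CharZero K := charZero_of_algebra_rat (algebraMap R K)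
  have : derivative f ∈ lifts (algebraMap (integralClosure R K) K) :=
    derivative_mem_lifts_of_roots_mem_range hm hsplit fun c hroot =>
      ⟨⟨c, isIntegral_criticalPoint hm hc hsplit hR hroot⟩, rfl⟩
  obtain ⟨⟨_, h⟩, hx⟩ := coeff_mem_range_of_derivative_mem_lifts this hi
  exact hx ▸ h

end CriticalValuePolynomial

section Discriminant

variable {R S : Type*} [CommRing R] [CommRing S]

/-- The library's Sylvester matrix has its coefficients in ascending order along columns, that of
`_root_.sylvester` in descending order along rows. -/
lemma sylvester_eq_submatrix_transpose (f g : R[X]) (m n : ℕ) :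
    _root_.sylvester f g m n = (Polynomial.sylvester f g m n).transpose.submatrix
      (Fin.revPerm.trans (finCongr (add_comm n m)))
      (Fin.revPerm.trans (finCongr (add_comm n m))) := by
  ext i j
  simp only [Matrix.submatrix_apply, Matrix.transpose_apply, Polynomial.sylvester, Matrix.of_apply,
    _root_.sylvester]
  obtain ⟨i', hi'⟩ : ∃ i', Fin.revPerm.trans (finCongr (add_comm n m)) i = i' := ⟨_, rfl⟩
  have hi : (i' : ℕ) + i + 1 = m + n := by
    simp only [← hi', Equiv.trans_apply, Fin.revPerm_apply, finCongr_apply, Fin.val_cast,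
      Fin.val_rev]
    omega
  have hj : (Fin.revPerm.trans (finCongr (add_comm n m)) j : ℕ) = m + n - (j + 1) := by
    simp [Fin.val_rev, add_comm n m]
  rw [hi', hj]
  clear hi' hj
  have := j.2
  induction i' using Fin.addCases with
  | left a =>
    simp only [Fin.addCases_left, Fin.val_castAdd, Set.mem_Icc] at hi ⊢
    rw [if_neg (by omega)]
    split_ifs <;> first | omega | congr 1; omega | rfl
  | right a =>
    simp only [Fin.addCases_right, Fin.val_natAdd, Set.mem_Icc] at hi ⊢
    rw [if_pos (by omega)]
    split_ifs <;> first | omega | congr 1; omega | rfl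

lemma det_sylvester_eq_resultant (f g : R[X]) (m n : ℕ) :
    (_root_.sylvester f g m n).det = Polynomial.resultant f g m n := by
  rw [sylvester_eq_submatrix_transpose, Matrix.det_submatrix_equiv_self, Matrix.det_transpose,
    Polynomial.resultant]

lemma polyDisc_eq (f : R[X]) : polyDisc f = (-1) ^ (f.natDegree * (f.natDegree - 1) / 2) *
    Polynomial.resultant f (derivative f) := by
  rw [polyDisc, _root_.resultant, det_sylvester_eq_resultant]

/-- The polynomial `f(t) - y` in `t`, with coefficients in `R[y]`, whose roots are the fibers
of `f`. -/
noncomputable def fiberPolynomial (f : R[X]) : R[X][X] := f.map C - C X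

lemma fiberPolynomial_map (φ : R →+* S) (f : R[X]) :
    fiberPolynomial (f.map φ) = (fiberPolynomial f).map (mapRingHom φ) := by
  simp [fiberPolynomial, Polynomial.map_map, mapRingHom_comp_C]

lemma derivative_fiberPolynomial (f : R[X]) :
    derivative (fiberPolynomial f) = (derivative f).map C := by
  simp [fiberPolynomial, derivative_map]

lemma natDegree_fiberPolynomial (f : R[X]) : (fiberPolynomial f).natDegree = f.natDegree := by
  rw [fiberPolynomial, natDegree_sub_C, natDegree_map_eq_of_injective C_injective]

lemma polyDisc_fiberPolynomial [IsAddTorsionFree R] (f : R[X]) :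
    polyDisc (fiberPolynomial f) = (-1) ^ (f.natDegree * (f.natDegree - 1) / 2) *
      Polynomial.resultant ((derivative f).map C) (fiberPolynomial f)
        (f.natDegree - 1) f.natDegree := by
  rw [polyDisc_eq, derivative_fiberPolynomial, natDegree_map_eq_of_injective C_injective,
    natDegree_derivative, natDegree_fiberPolynomial, resultant_comm,
    (Nat.even_mul_pred_self _).neg_one_pow, one_mul]

lemma polyDisc_fiberPolynomial_map [Nontrivial S] [IsAddTorsionFree R] [IsAddTorsionFree S]
    (φ : R →+* S) {f : R[X]} (hf : f.Monic) :
    polyDisc (fiberPolynomial (f.map φ)) = (polyDisc (fiberPolynomial f)).map φ := by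
  have hmap : ((derivative (f.map φ)).map C : S[X][X]) =
      ((derivative f).map C).map (mapRingHom φ) := by
    rw [derivative_map, Polynomial.map_map, Polynomial.map_map, mapRingHom_comp_C]
  rw [polyDisc_fiberPolynomial, polyDisc_fiberPolynomial, hf.natDegree_map, hmap,
    fiberPolynomial_map, resultant_map_map, coe_mapRingHom]
  simp only [Polynomial.map_mul, Polynomial.map_pow, Polynomial.map_neg, Polynomial.map_one]

lemma exists_polyDisc_fiberPolynomial_eq_mul_criticalValuePolynomial [IsDomain R] [CharZero R]
    {f : R[X]} (hf : f.Monic) (hd : f.natDegree ≠ 0) (hsplit : (derivative f).Splits) :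
    ∃ z : ℤ, z ≠ 0 ∧ polyDisc (fiberPolynomial f) = (z : R[X]) * criticalValuePolynomial f := by
  set n := f.natDegree
  have hprod : ((derivative f).roots.map fun c => C (f.eval c) - X).prod =
      (-1) ^ (derivative f).roots.card * criticalValuePolynomial f := by
    rw [criticalValuePolynomial, Multiset.map_map, ← Multiset.prod_replicate,
      ← Multiset.map_const', ← Multiset.prod_map_mul]
    simp
  have hres : Polynomial.resultant ((derivative f).map C) (fiberPolynomial f) (n - 1) n =
      (n : R[X]) ^ n * ((derivative f).roots.map fun c => C (f.eval c) - X).prod := by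
    have := resultant_eq_prod_eval _ _ n (natDegree_fiberPolynomial f).le (hsplit.map C)
    rw [natDegree_map_eq_of_injective C_injective, natDegree_derivative,
      leadingCoeff_map_of_injective C_injective, leadingCoeff_derivative, hf.leadingCoeff, one_mul,
      hsplit.roots_map_of_injective C_injective, Multiset.map_map] at this
    simpa [fiberPolynomial, Function.comp_def, eval_map_apply] using this
  refine ⟨(-1) ^ (n * (n - 1) / 2) * n ^ n * (-1) ^ (derivative f).roots.card, by simp [hd], ?_⟩
  rw [polyDisc_fiberPolynomial, hres, hprod]
  push_cast
  ring

end Discriminant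

section SquareRoots

lemma not_irreducible_X_sq_sub_C_iff {R : Type*} [CommRing R] [IsDomain R] (d : R) :
    ¬Irreducible (X ^ 2 - C d) ↔ IsSquare d := by
  rw [(monic_X_pow_sub_C d two_ne_zero).not_irreducible_iff_exists_add_mul_eq_coeff
    natDegree_X_pow_sub_C]
  simp only [coeff_sub, coeff_X_pow, coeff_C]
  constructor
  · rintro ⟨a, b, hprod, hsum⟩
    norm_num at hprod hsum
    exact ⟨a, by linear_combination -hprod + a * hsum⟩
  · rintro ⟨q, rfl⟩
    exact ⟨q, -q, by simp, by simp⟩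

lemma exists_refine_sqrt {R : Type*} [CommRing R] (h2 : IsUnit (2 : R)) {P r : R[X]}
    (hr : r.Monic) {j : ℕ} (hj : j < r.natDegree)
    (hlt : (P - r ^ 2).degree < (r.natDegree + (j + 1) : ℕ)) :
    ∃ r' : R[X], r'.Monic ∧ r'.natDegree = r.natDegree ∧
      (P - r' ^ 2).degree < (r.natDegree + j : ℕ) := by
  nontriviality R
  obtain ⟨a, ha⟩ := h2.dvd (a := (P - r ^ 2).coeff (r.natDegree + j))
  have hdeg : (C a * X ^ j).degree < r.degree := by
    rw [degree_eq_natDegree hr.ne_zero]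
    exact (degree_C_mul_X_pow_le _ _).trans_lt (by exact_mod_cast hj)
  refine ⟨r + C a * X ^ j, hr.add_of_left hdeg, natDegree_add_eq_left_of_degree_lt hdeg, ?_⟩
  have hexpand : P - (r + C a * X ^ j) ^ 2 =
      (P - r ^ 2) - C (2 * a) * (r * X ^ j) - C (a ^ 2) * X ^ (j + j) := by
    simp only [C_mul, C_pow, C_ofNat]
    ring
  rw [degree_lt_iff_coeff_zero] at hlt ⊢
  intro N hN
  rw [hexpand, ← ha, coeff_sub, coeff_sub, coeff_C_mul, coeff_C_mul_X_pow, if_neg (by omega),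
    sub_zero, coeff_mul_X_pow', if_pos (by omega)]
  obtain rfl | hN' := hN.eq_or_lt
  · rw [Nat.add_sub_cancel, hr.coeff_natDegree, mul_one, sub_self]
  · rw [hlt N (by omega), coeff_eq_zero_of_natDegree_lt (p := r) (by omega), mul_zero, sub_zero]

theorem exists_approximate_sqrt {R : Type*} [CommRing R] [Nontrivial R] (h2 : IsUnit (2 : R))
    {P : R[X]} (hP : P.Monic) {m : ℕ} (hd : P.natDegree = 2 * m) :
    ∃ r : R[X], r.Monic ∧ r.natDegree = m ∧ (P - r ^ 2).degree < m := by
  suffices h : ∀ j ≤ m, ∃ r : R[X],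
      r.Monic ∧ r.natDegree = m ∧ (P - r ^ 2).degree < (m + j : ℕ) from h 0 m.zero_le
  intro j hj
  induction hj using Nat.decreasingInduction with
  | self =>
    refine ⟨X ^ m, monic_X_pow m, natDegree_X_pow m, ?_⟩
    rw [← two_mul, ← hd, ← degree_eq_natDegree hP.ne_zero]
    refine degree_sub_lt_left ?_ hP.ne_zero ?_
    · rw [← pow_mul, degree_X_pow, degree_eq_natDegree hP.ne_zero, hd, mul_comm]
    · rw [hP.leadingCoeff, ((monic_X_pow m).pow 2).leadingCoeff]
  | of_succ j hj ih =>
    obtain ⟨r, hr, rfl, hlt⟩ := ih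
    exact exists_refine_sqrt h2 hr hj hlt

theorem eq_sq_of_isSquare {R : Type*} [CommRing R] [IsDomain R] (h2 : (2 : R) ≠ 0) {P r : R[X]}
    (hlt : (P - r ^ 2).degree < r.degree) (hP : IsSquare P) : P = r ^ 2 := by
  obtain ⟨q, rfl⟩ := hP
  have hfactor : q * q - r ^ 2 = (q - r) * (q + r) := by ring
  by_contra hne
  rw [← ne_eq, ← sub_ne_zero, hfactor, mul_ne_zero_iff] at hne
  rw [hfactor, degree_mul] at hlt
  have hsub : (q - r).degree < r.degree :=
    (le_add_of_nonneg_right (zero_le_degree_iff.mpr hne.2)).trans_lt hlt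
  have hadd : (q + r).degree < r.degree :=
    (le_add_of_nonneg_left (zero_le_degree_iff.mpr hne.1)).trans_lt hlt
  have htwo : (q + r) - (q - r) = C 2 * r := by rw [C_ofNat]; ring
  have hlt := (degree_sub_le (q + r) (q - r)).trans_lt (max_lt hadd hsub)
  rw [htwo, degree_C_mul h2] at hlt
  exact hlt.false

variable {k : Type*} [Field k] {z : k} {P : k[X]}

lemma isSquare_and_even_natDegree_of_isSquare_C_mul (hP : P.Monic) (hz : z ≠ 0)
    (h : IsSquare (C z * P)) : IsSquare z ∧ Even P.natDegree := by
  obtain ⟨q, hq⟩ := h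
  refine ⟨⟨q.leadingCoeff, ?_⟩, ⟨q.natDegree, ?_⟩⟩
  · rw [← leadingCoeff_mul, ← hq, leadingCoeff_C_mul_of_isUnit hz.isUnit, hP, mul_one]
  · rw [← two_mul, ← natDegree_pow, sq, ← hq, natDegree_C_mul hz]

lemma isSquare_C_mul_iff (hz : z ≠ 0) (hsq : IsSquare z) : IsSquare (C z * P) ↔ IsSquare P := by
  refine ⟨fun h => ?_, (hsq.map C).mul⟩
  have := (hsq.inv.map (C : k →+* k[X])).mul h
  rwa [← mul_assoc, ← C_mul, inv_mul_cancel₀ hz, C_1, one_mul] at this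

end SquareRoots

section CoefficientAlgebra

variable {k A B : Type*} [CommRing k] [CommRing A] [CommRing B] [Algebra k A] [Algebra k B]

/-- The subalgebra generated by the coefficients of a polynomial. -/
abbrev coeffAlgebra (k : Type*) {A : Type*} [CommRing k] [CommRing A] [Algebra k A] (p : A[X]) :
    Subalgebra k A :=
  Algebra.adjoin k (Set.range p.coeff)

lemma coeffAlgebra_sq_le_adjoin {r : A[X]} (hr : r.Monic) :
    coeffAlgebra k (r ^ 2) ≤ Algebra.adjoin k (Set.range fun i : Fin r.natDegree => r.coeff i) := by
  have hmem (i : ℕ) : r.coeff i ∈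
      Algebra.adjoin k (Set.range fun i : Fin r.natDegree => r.coeff i) := by
    obtain hi | rfl | hi := lt_trichotomy i r.natDegree
    · exact Algebra.subset_adjoin ⟨⟨i, hi⟩, rfl⟩
    · exact hr.coeff_natDegree ▸ one_mem _
    · exact coeff_eq_zero_of_natDegree_lt hi ▸ zero_mem _
  refine Algebra.adjoin_le ?_
  rintro _ ⟨i, rfl⟩
  rw [sq, SetLike.mem_coe, coeff_mul]
  exact sum_mem fun x _ => mul_mem (hmem _) (hmem _)

lemma isIntegral_of_subalgebra_map_le {φ : A →ₐ[k] B} (hφ : Function.Surjective φ)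
    {S : Subalgebra k A} {T : Subalgebra k B} (hST : S.map φ ≤ T)
    [Algebra.IsIntegral S A] : Algebra.IsIntegral T B where
  isIntegral b := by
    obtain ⟨a, rfl⟩ := hφ b
    exact (Algebra.IsIntegral.isIntegral (R := S) a).map_of_comp_eq
      ((Subalgebra.inclusion hST).comp (φ.subalgebraMap S) : S →+* T) (φ : A →+* B) rfl

lemma isIntegral_coeffAlgebra_map {φ : A →ₐ[k] B} (hφ : Function.Surjective φ)
    (p : A[X]) [Algebra.IsIntegral (coeffAlgebra k p) A] :
    Algebra.IsIntegral (coeffAlgebra k (p.map (φ : A →+* B))) B := by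
  refine isIntegral_of_subalgebra_map_le (S := coeffAlgebra k p) hφ ?_
  rw [AlgHom.map_adjoin]
  refine Algebra.adjoin_mono ?_
  rintro _ ⟨_, ⟨i, rfl⟩, rfl⟩
  exact ⟨i, coeff_map _ _⟩

end CoefficientAlgebra

section KrullDimension

lemma ringKrullDim_le_of_isIntegral {R S : Type*} [CommRing R] [CommRing S] [Algebra R S]
    [Algebra.IsIntegral R S] : ringKrullDim S ≤ ringKrullDim R :=
  Order.krullDim_le_of_strictMono (PrimeSpectrum.comap (algebraMap R S)) fun p q hpq =>
    Ideal.IsIntegral.comap_lt_comap (R := R) (I := p.asIdeal) (J := q.asIdeal) hpq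

variable {k A : Type*} [Field k] [CommRing A] [Algebra k A]

lemma ringKrullDim_adjoin_range_le {ι : Type*} [Finite ι] (v : ι → A) :
    ringKrullDim (Algebra.adjoin k (Set.range v)) ≤ Nat.card ι := by
  rw [Algebra.adjoin_range_eq_range_aeval]
  refine (ringKrullDim_le_of_surjective _ (AlgHom.rangeRestrict_surjective _)).trans ?_
  rw [MvPolynomial.ringKrullDim_of_isNoetherianRing, ringKrullDim_eq_zero_of_field, zero_add]

theorem ringKrullDim_le_natDegree_of_isIntegral_coeffAlgebra_sq {r : A[X]} (hr : r.Monic)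
    [Algebra.IsIntegral (coeffAlgebra k (r ^ 2)) A] : ringKrullDim A ≤ r.natDegree := by
  have := isIntegral_of_subalgebra_map_le (φ := AlgHom.id k A) Function.surjective_id
    ((Subalgebra.map_id _).trans_le (coeffAlgebra_sq_le_adjoin (k := k) hr))
  refine ringKrullDim_le_of_isIntegral.trans ((ringKrullDim_adjoin_range_le (k := k)
    fun i : Fin r.natDegree => r.coeff i).trans ?_)
  rw [Nat.card_fin]

end KrullDimension

section CenteredPolynomial

variable {R S : Type*} [CommRing R] [CommRing S]

/-- The polynomial `tⁿ + s₂ tⁿ⁻² + ⋯ + s_{n-1} t`, where `s i` stands for `s_{i+2}`. -/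
noncomputable def centeredPolynomial (n : ℕ) (s : Fin (n - 2) → R) : R[X] :=
  X ^ n + ∑ i : Fin (n - 2), C (s i) * X ^ (n - (i + 2))

lemma map_centeredPolynomial (φ : R →+* S) (n : ℕ) (s : Fin (n - 2) → R) :
    (centeredPolynomial n s).map φ = centeredPolynomial n fun i => φ (s i) := by
  simp [centeredPolynomial, Polynomial.map_sum]

lemma coeff_centeredPolynomial (n j : ℕ) (s : Fin (n - 2) → R) :
    (centeredPolynomial n s).coeff j =
      (if j = n then 1 else 0) + ∑ i : Fin (n - 2), if j = n - (i + 2) then s i else 0 := by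
  simp [centeredPolynomial, coeff_X_pow, finsetSum_coeff]

lemma coeff_centeredPolynomial_eq_zero {n j : ℕ} (s : Fin (n - 2) → R) (hj : n ≤ j + 1)
    (hjn : j ≠ n) : (centeredPolynomial n s).coeff j = 0 := by
  rw [coeff_centeredPolynomial, if_neg hjn, Finset.sum_eq_zero fun i _ => if_neg (by omega),
    add_zero]

lemma coeff_centeredPolynomial_sub (n : ℕ) (s : Fin (n - 2) → R) (i : Fin (n - 2)) :
    (centeredPolynomial n s).coeff (n - (i + 2)) = s i := by
  rw [coeff_centeredPolynomial, if_neg (by omega), zero_add,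
    Finset.sum_eq_single i (fun b _ hb => if_neg fun h => hb (Fin.ext (by omega))) (by simp),
    if_pos rfl]

lemma coeff_centeredPolynomial_self (n : ℕ) (s : Fin (n - 2) → R) :
    (centeredPolynomial n s).coeff n = 1 := by
  rw [coeff_centeredPolynomial, if_pos rfl, Finset.sum_eq_zero fun i _ => if_neg (by omega),
    add_zero]

lemma natDegree_centeredPolynomial [Nontrivial R] (n : ℕ) (s : Fin (n - 2) → R) :
    (centeredPolynomial n s).natDegree = n := by
  refine natDegree_eq_of_le_of_coeff_ne_zero ?_ ?_
  · exact natDegree_le_iff_coeff_eq_zero.mpr fun N hN =>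
      coeff_centeredPolynomial_eq_zero s (by omega) hN.ne'
  · rw [coeff_centeredPolynomial_self]
    exact one_ne_zero

lemma monic_centeredPolynomial (n : ℕ) (s : Fin (n - 2) → R) : (centeredPolynomial n s).Monic := by
  nontriviality R
  rw [Monic, leadingCoeff, natDegree_centeredPolynomial, coeff_centeredPolynomial_self]

lemma nextCoeff_centeredPolynomial (n : ℕ) (s : Fin (n - 2) → R) :
    (centeredPolynomial n s).nextCoeff = 0 := by
  nontriviality R
  rw [nextCoeff, natDegree_centeredPolynomial, ite_eq_left_iff]
  exact fun hn => coeff_centeredPolynomial_eq_zero s (by omega) (by omega)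

end CenteredPolynomial

section GenericDiscriminant

variable {k A : Type*} [Field k] [CharZero k] [CommRing A] [IsDomain A] [Algebra k A]

theorem exists_polyDisc_fiberPolynomial_eq_mul_monic {f : A[X]} (hf : f.Monic)
    (hd : f.natDegree ≠ 0) (hc : f.nextCoeff = 0) :
    ∃ (z : ℤ) (P : A[X]), z ≠ 0 ∧ P.Monic ∧ P.natDegree = f.natDegree - 1 ∧
      polyDisc (fiberPolynomial f) = z * P ∧
      ∀ i ≠ 0, IsIntegral (coeffAlgebra k P) (f.coeff i) := by
  have : CharZero A := charZero_of_injective_algebraMap (FaithfulSMul.algebraMap_injective k A)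
  let K := AlgebraicClosure (FractionRing A)
  have hinj : Function.Injective (algebraMap A K) :=
    have := FaithfulSMul.trans A (FractionRing A) K
    FaithfulSMul.algebraMap_injective A K
  have : CharZero K := charZero_of_injective_algebraMap hinj
  set fK := f.map (algebraMap A K)
  have hfKd : fK.natDegree = f.natDegree := hf.natDegree_map _
  have hsplit : (derivative fK).Splits := IsAlgClosed.splits _
  obtain ⟨z, hz, hdisc⟩ := exists_polyDisc_fiberPolynomial_eq_mul_criticalValuePolynomial
    (hf.map _) (hfKd.trans_ne hd) hsplit
  rw [polyDisc_fiberPolynomial_map _ hf] at hdisc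
  have hunit : IsUnit (z : A[X]) := by
    simpa using (Int.cast_ne_zero.mpr hz : (z : k) ≠ 0).isUnit.map (C.comp (algebraMap k A))
  obtain ⟨P, hP⟩ : (z : A[X]) ∣ polyDisc (fiberPolynomial f) := hunit.dvd
  have hmap : P.map (algebraMap A K) = criticalValuePolynomial fK := by
    rw [hP, Polynomial.map_mul, Polynomial.map_intCast] at hdisc
    exact mul_left_cancel₀ (Int.cast_ne_zero.mpr hz) hdisc
  have hmonic : P.Monic := hinj.monic_map_iff.mpr (hmap ▸ monic_criticalValuePolynomial fK)
  refine ⟨z, P, hz, hmonic, ?_, hP, fun i hi => ?_⟩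
  · rw [← hfKd, ← natDegree_criticalValuePolynomial fK hsplit, ← hmap, hmonic.natDegree_map]
  let : Algebra ℚ (coeffAlgebra k P) :=
    ((algebraMap k (coeffAlgebra k P)).comp (algebraMap ℚ k)).toAlgebra
  rw [← isIntegral_algebraMap_iff hinj, ← coeff_map]
  refine isIntegral_coeff_of_criticalValuePolynomial_mem_lifts (hf.map _) ?_ hsplit ?_ hi
  · rw [nextCoeff_map hinj, hc, map_zero]
  · rw [← hmap, lifts_iff_coeff_lifts]
    exact fun j =>
      ⟨⟨P.coeff j, Algebra.subset_adjoin ⟨j, rfl⟩⟩, (coeff_map (algebraMap A K) j).symm⟩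

end GenericDiscriminant

section GenericFiber

lemma isIntegral_of_forall_isIntegral_X {k σ : Type*} [CommRing k]
    {S : Subalgebra k (MvPolynomial σ k)}
    (hX : ∀ i, IsIntegral S (MvPolynomial.X i : MvPolynomial σ k)) :
    Algebra.IsIntegral S (MvPolynomial σ k) := by
  have hle : (Algebra.adjoin k (Set.range MvPolynomial.X) : Subalgebra k (MvPolynomial σ k)) ≤
      (integralClosure S (MvPolynomial σ k)).restrictScalars k :=
    Algebra.adjoin_le (Set.range_subset_iff.mpr hX)
  rw [MvPolynomial.adjoin_range_X] at hle
  exact ⟨fun a => hle Algebra.mem_top⟩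

theorem exists_polyDisc_centeredPolynomial_eq_mul_monic (k : Type*) [Field k] [CharZero k] {n : ℕ}
    (hn : n ≠ 0) :
    ∃ (z : ℤ) (P : (MvPolynomial (Fin (n - 2)) k)[X]), z ≠ 0 ∧ P.Monic ∧ P.natDegree = n - 1 ∧
      (∀ s : Fin (n - 2) → k, polyDisc (fiberPolynomial (centeredPolynomial n s)) =
        C (z : k) * P.map (MvPolynomial.eval s)) ∧
      Algebra.IsIntegral (coeffAlgebra k P) (MvPolynomial (Fin (n - 2)) k) := by
  let f : (MvPolynomial (Fin (n - 2)) k)[X] := centeredPolynomial n MvPolynomial.X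
  have hd : f.natDegree = n := natDegree_centeredPolynomial n _
  obtain ⟨z, P, hz, hP, hPd, hdisc, hint⟩ := exists_polyDisc_fiberPolynomial_eq_mul_monic (k := k)
    (monic_centeredPolynomial n MvPolynomial.X) (hd.trans_ne hn) (nextCoeff_centeredPolynomial n _)
  refine ⟨z, P, hz, hP, hPd.trans (by rw [hd]), fun s => ?_,
    isIntegral_of_forall_isIntegral_X fun i => ?_⟩
  · have hspec : centeredPolynomial n s = f.map (MvPolynomial.eval s) := by
      simp [f, map_centeredPolynomial]
    rw [hspec, polyDisc_fiberPolynomial_map _ (monic_centeredPolynomial n _), hdisc,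
      Polynomial.map_mul, Polynomial.map_intCast, map_intCast]
  · rw [← coeff_centeredPolynomial_sub n MvPolynomial.X i]
    exact hint _ (by omega)

end GenericFiber

section ReducibleLocus

lemma isSquare_map_iff {A k : Type*} [CommRing A] [CommRing k] [IsDomain k] (h2 : (2 : k) ≠ 0)
    {P r : A[X]} (hr : r.Monic) (hlt : (P - r ^ 2).degree < r.natDegree) (φ : A →+* k) :
    IsSquare (P.map φ) ↔ (P - r ^ 2).map φ = 0 := by
  rw [Polynomial.map_sub, Polynomial.map_pow, sub_eq_zero]
  refine ⟨eq_sq_of_isSquare h2 ?_, fun h => h ▸ IsSquare.sq _⟩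
  rw [← Polynomial.map_pow, ← Polynomial.map_sub, degree_eq_natDegree (hr.map φ).ne_zero,
    hr.natDegree_map]
  exact degree_map_le.trans_lt hlt

variable {k : Type*} [Field k]

lemma ringKrullDim_quotient_le_of_sub_sq_mem {A : Type*} [CommRing A] [Algebra k A] {P r : A[X]}
    [Algebra.IsIntegral (coeffAlgebra k P) A] (hr : r.Monic) {I : Ideal A}
    (hI : ∀ i, (P - r ^ 2).coeff i ∈ I) : ringKrullDim (A ⧸ I) ≤ r.natDegree := by
  have hint := isIntegral_coeffAlgebra_map (Ideal.Quotient.mkₐ_surjective k I) P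
  have hsq : P.map (Ideal.Quotient.mkₐ k I : A →+* A ⧸ I) =
      (r.map (Ideal.Quotient.mkₐ k I : A →+* A ⧸ I)) ^ 2 := by
    rw [← Polynomial.map_pow, ← sub_eq_zero, ← Polynomial.map_sub]
    ext i
    rw [coeff_map, coeff_zero]
    exact Ideal.Quotient.eq_zero_iff_mem.mpr (hI i)
  rw [hsq] at hint
  have hdim := ringKrullDim_le_natDegree_of_isIntegral_coeffAlgebra_sq (k := k)
    (hr.map (Ideal.Quotient.mkₐ k I : A →+* A ⧸ I))
  exact hdim.trans (by exact_mod_cast natDegree_map_le)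

theorem isSquare_locus_closed_and_dim_le (h2 : (2 : k) ≠ 0) {σ : Type*}
    {P : (MvPolynomial σ k)[X]} [Algebra.IsIntegral (coeffAlgebra k P) (MvPolynomial σ k)]
    (hP : P.Monic) {m : ℕ} (hd : P.natDegree = 2 * m) {Z : Set (σ → k)}
    (hZ : Z = {s | IsSquare (P.map (MvPolynomial.eval s))}) :
    (∃ I : Ideal (MvPolynomial σ k), Z = MvPolynomial.zeroLocus k I) ∧
      ringKrullDim (MvPolynomial σ k ⧸ MvPolynomial.vanishingIdeal k Z) ≤ m := by
  have h2' : IsUnit (2 : MvPolynomial σ k) :=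
    map_ofNat (MvPolynomial.C : k →+* MvPolynomial σ k) 2 ▸ h2.isUnit.map MvPolynomial.C
  obtain ⟨r, hr, rfl, hlt⟩ := exists_approximate_sqrt h2' hP hd
  have hmem (s : σ → k) : s ∈ Z ↔ ∀ i, MvPolynomial.aeval s ((P - r ^ 2).coeff i) = 0 := by
    rw [hZ, Set.mem_ofPred_eq, isSquare_map_iff h2 hr hlt, Polynomial.ext_iff]
    simp only [coeff_map, coeff_zero, MvPolynomial.aeval_eq_eval]
  refine ⟨⟨Ideal.span (Set.range (P - r ^ 2).coeff), ?_⟩,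
    ringKrullDim_quotient_le_of_sub_sq_mem (k := k) hr fun i s hs => (hmem s).mp hs i⟩
  ext s
  rw [MvPolynomial.zeroLocus_span, Set.mem_ofPred_eq, Set.forall_mem_range, hmem]

/-- The tuples `s` for which the curve `x² = disc_t(tⁿ + s₂ tⁿ⁻² + ⋯ + s_{n-1} t - y)` is
reducible over `k`. -/
def reducibleLocus (k : Type*) [Field k] (n : ℕ) : Set (Fin (n - 2) → k) :=
  {s | ¬Irreducible (X ^ 2 - C (polyDisc (fiberPolynomial (centeredPolynomial n s))))}

theorem reducible_fibers_locus_closed_and_dim_le_general [CharZero k] {n : ℕ} (hn : n ≠ 0) :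
    (∃ I : Ideal (MvPolynomial (Fin (n - 2)) k),
      reducibleLocus k n = MvPolynomial.zeroLocus k I) ∧
    ringKrullDim (MvPolynomial (Fin (n - 2)) k ⧸
      MvPolynomial.vanishingIdeal k (reducibleLocus k n)) ≤ ((n - 1) / 2 : ℕ) := by
  obtain ⟨z, P, hz, hP, hd, hdisc, hint⟩ := exists_polyDisc_centeredPolynomial_eq_mul_monic k hn
  have hz : (z : k) ≠ 0 := Int.cast_ne_zero.mpr hz
  have hmem (s) : s ∈ reducibleLocus k n ↔ IsSquare (C (z : k) * P.map (MvPolynomial.eval s)) := by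
    rw [reducibleLocus, Set.mem_ofPred_eq, not_irreducible_X_sq_sub_C_iff, hdisc]
  obtain hZ | ⟨s₀, hs₀⟩ := (reducibleLocus k n).eq_empty_or_nonempty
  · rw [hZ, MvPolynomial.vanishingIdeal_empty]
    refine ⟨⟨⊤, MvPolynomial.zeroLocus_top.symm⟩, ?_⟩
    have := Ideal.Quotient.subsingleton_iff.mpr
      (rfl : (⊤ : Ideal (MvPolynomial (Fin (n - 2)) k)) = ⊤)
    rw [ringKrullDim_eq_bot_of_subsingleton]
    exact bot_le
  · obtain ⟨hsq, heven⟩ :=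
      isSquare_and_even_natDegree_of_isSquare_C_mul (hP.map _) hz ((hmem s₀).mp hs₀)
    rw [hP.natDegree_map, hd] at heven
    refine isSquare_locus_closed_and_dim_le two_ne_zero hP
      (hd.trans (Nat.two_mul_div_two_of_even heven).symm) (Set.ext fun s => ?_)
    rw [hmem, isSquare_C_mul_iff hz hsq, Set.mem_ofPred_eq]

end ReducibleLocus

end

/-- Let `n ≥ 3` be odd.  The locus `Z ⊆ ℂ^(n−2)` of tuples `(s₂, …, s_{n−1})` for which
the plane curve `x² = disc_t(tⁿ + s₂ tⁿ⁻² + ⋯ + s_{n−1} t − y)` fails to be geometrically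
irreducible (i.e. `x² − disc_t(⋯)` is not irreducible in `ℂ[y][x]`) is Zariski closed,
and the Krull dimension of `ℂ[s₂, …, s_{n−1}]/I(Z)` is at most `(n − 1)/2`.
(Here `s : Fin (n−2) → ℂ` encodes the tuple via `s i = s_{i+2}`.) -/
theorem reducible_fibers_locus_closed_and_dim_le (n : ℕ) (hn : 3 ≤ n) (hodd : Odd n)
    (Z : Set (Fin (n - 2) → ℂ))
    (hZ : Z = {s : Fin (n - 2) → ℂ |
      ¬ Irreducible ((Polynomial.X : Polynomial (Polynomial ℂ)) ^ 2 -
        Polynomial.C (polyDisc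
          ((Polynomial.X : Polynomial (Polynomial ℂ)) ^ n +
            ∑ i : Fin (n - 2),
              Polynomial.C (Polynomial.C (s i)) *
                (Polynomial.X : Polynomial (Polynomial ℂ)) ^ (n - ((i : ℕ) + 2)) -
            Polynomial.C (Polynomial.X : Polynomial ℂ))))}) :
    (∃ I : Ideal (MvPolynomial (Fin (n - 2)) ℂ),
      Z = {x : Fin (n - 2) → ℂ | ∀ p ∈ I, MvPolynomial.eval x p = 0}) ∧
    ringKrullDim (MvPolynomial (Fin (n - 2)) ℂ ⧸ vanishingIdeal Z) ≤
      (((n - 1) / 2 : ℕ) : WithBot (WithTop ℕ)) := by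
  obtain ⟨hclosed, hdim⟩ :=
    reducible_fibers_locus_closed_and_dim_le_general (k := ℂ) (Nat.ne_zero_of_lt hn)
  have hZ' : Z = reducibleLocus ℂ n := by
    simp [hZ, reducibleLocus, fiberPolynomial, centeredPolynomial, Polynomial.map_sum]
  have hI : vanishingIdeal Z = MvPolynomial.vanishingIdeal ℂ Z := rfl
  rw [hI, hZ']
  exact ⟨hclosed, hdim⟩
end
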